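/- A ring R is a √J-clean ring if and only if the quotient ring R/J(R) is a √J-clean ring and idempotents lift modulo J(R) (i.e., for every x ∈ R with x² − x ∈ J(R) there exists an idempotent e ∈ R with x − e ∈ J(R)). -/

import Mathlib

/-- `√J(R)`: the set of elements some positive power of which lies in the
Jacobson radical `J(R)` of the ring `R`. -/
def sqrtJ (R : Type*) [Ring R] : Set R :=
  {z : R | ∃ n : ℕ, 1 ≤ n ∧ z ^ n ∈ (⊥ : TwoSidedIdeal R).jacobson}

/-- `R` is a `√J`-clean ring: every element is the sum of an idempotent and an
element of `√J(R)`. -/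
def IsSqrtJCleanRing (R : Type*) [Ring R] : Prop :=
  ∀ a : R, ∃ e z : R, IsIdempotentElem e ∧ z ∈ sqrtJ R ∧ a = e + z

/-- `R` is a strongly `√J`-clean ring: every element is the sum of an idempotent
and an element of `√J(R)` that commute with each other. -/
def IsStronglySqrtJCleanRing (R : Type*) [Ring R] : Prop :=
  ∀ a : R, ∃ e z : R, IsIdempotentElem e ∧ z ∈ sqrtJ R ∧ a = e + z ∧ e * z = z * e

/-- `R` is a uniquely `√J`-clean ring: every element is uniquely the sum of an
idempotent and an element of `√J(R)`. -/
def IsUniquelySqrtJCleanRing (R : Type*) [Ring R] : Prop :=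
  ∀ a : R, ∃! p : R × R, IsIdempotentElem p.1 ∧ p.2 ∈ sqrtJ R ∧ a = p.1 + p.2

/-- `R` is a uniquely clean ring: every element is uniquely the sum of an
idempotent and a unit. -/
def IsUniquelyCleanRing (R : Type*) [Ring R] : Prop :=
  ∀ a : R, ∃! p : R × R, IsIdempotentElem p.1 ∧ IsUnit p.2 ∧ a = p.1 + p.2

theorem aux_left {R : Type*} [Ring R] {x : R}
    (hx : x ∈ (⊥ : TwoSidedIdeal R).jacobson) : ∃ s, s * (1 + x) = 1 := by
  obtain ⟨z, hz⟩ := TwoSidedIdeal.mem_jacobson_iff.1 hx 1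
  rw [TwoSidedIdeal.mem_bot] at hz
  refine ⟨z, ?_⟩
  rw [mul_add, ← sub_eq_zero, ← hz]
  noncomm_ring

theorem aux_unit {R : Type*} [Ring R] {x : R}
    (hx : x ∈ (⊥ : TwoSidedIdeal R).jacobson) : IsUnit (1 + x) := by
  obtain ⟨s, hs⟩ := aux_left hx
  have h1 : -(s * x) ∈ (⊥ : TwoSidedIdeal R).jacobson :=
    TwoSidedIdeal.neg_mem _ (TwoSidedIdeal.mul_mem_left _ _ _ hx)
  obtain ⟨t, ht⟩ := aux_left h1
  have h2 : 1 + -(s * x) = s := by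
    rw [← hs]; noncomm_ring
  rw [h2] at ht
  have h3 : t = 1 + x := left_inv_eq_right_inv ht hs
  rw [h3] at ht
  exact ⟨⟨1 + x, s, ht, hs⟩, rfl⟩

theorem aux_sqrt_unit {R : Type*} [Ring R] {z : R} (hz : z ∈ sqrtJ R) : IsUnit (1 + z) := by
  obtain ⟨n, -, hn⟩ := hz
  have h1 : (1 - -z) * ∑ i ∈ Finset.range n, (-z) ^ i = 1 - (-z) ^ n := mul_neg_geom_sum _ _
  have h2 : (∑ i ∈ Finset.range n, (-z) ^ i) * (1 - -z) = 1 - (-z) ^ n := geom_sum_mul_neg _ _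
  have h3 : IsUnit (1 - (-z) ^ n) := by
    rw [sub_eq_add_neg]
    apply aux_unit
    rw [neg_pow]
    exact TwoSidedIdeal.neg_mem _ (TwoSidedIdeal.mul_mem_left _ _ _ hn)
  have hc : Commute (1 - -z) (∑ i ∈ Finset.range n, (-z) ^ i) := h1.trans h2.symm
  rw [← h1, hc.isUnit_mul_iff] at h3
  simpa using h3.1

theorem aux_mk {R : Type*} [Ring R] (I : TwoSidedIdeal R) (x : R) :
    I.ringCon.mk' x = 0 ↔ x ∈ I := by
  rw [← TwoSidedIdeal.mem_ker, TwoSidedIdeal.ker_ringCon_mk']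

theorem aux_quot {R : Type*} [Ring R] (x : R)
    (hx : (⊥ : TwoSidedIdeal R).jacobson.ringCon.mk' x ∈
      (⊥ : TwoSidedIdeal (⊥ : TwoSidedIdeal R).jacobson.ringCon.Quotient).jacobson) :
    x ∈ (⊥ : TwoSidedIdeal R).jacobson := by
  set J := (⊥ : TwoSidedIdeal R).jacobson with hJ
  have h := Ideal.comap_jacobson_of_surjective (f := J.ringCon.mk')
    J.ringCon.mk'_surjective (K := ⊥)
  have hk : Ideal.comap J.ringCon.mk' ⊥ = (⊥ : Ideal R).jacobson := by
    ext y
    rw [Ideal.mem_comap, Ideal.mem_bot, aux_mk, hJ, ← TwoSidedIdeal.mem_asIdeal,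
      TwoSidedIdeal.asIdeal_jacobson, TwoSidedIdeal.bot_asIdeal]
  rw [hk, Ideal.jacobson_idem] at h
  rw [← TwoSidedIdeal.mem_asIdeal, TwoSidedIdeal.asIdeal_jacobson, TwoSidedIdeal.bot_asIdeal,
    ← Ideal.mem_comap, h] at hx
  rw [hJ, ← TwoSidedIdeal.mem_asIdeal, TwoSidedIdeal.asIdeal_jacobson, TwoSidedIdeal.bot_asIdeal]
  exact hx

theorem isSqrtJCleanRing_iff_quotient (R : Type*) [Ring R] :
    IsSqrtJCleanRing R ↔
      (IsSqrtJCleanRing ((⊥ : TwoSidedIdeal R).jacobson.ringCon.Quotient) ∧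
        ∀ x : R, x ^ 2 - x ∈ (⊥ : TwoSidedIdeal R).jacobson →
          ∃ e : R, IsIdempotentElem e ∧ x - e ∈ (⊥ : TwoSidedIdeal R).jacobson) := by
  constructor
  · intro h
    refine ⟨fun a => ?_, fun x hx => ?_⟩
    · obtain ⟨a, rfl⟩ := RingCon.mk'_surjective _ a
      obtain ⟨e, z, he, ⟨n, hn, hz⟩, rfl⟩ := h a
      refine ⟨_, _, he.map (RingCon.mk' _), ⟨n, hn, ?_⟩, map_add _ _ _⟩
      rw [← map_pow, (aux_mk _ _).2 hz]
      exact TwoSidedIdeal.zero_mem _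
    · obtain ⟨e, z, he, hz, hxe⟩ := h (x - 1)
      obtain ⟨u, hu⟩ := aux_sqrt_unit hz
      have hx' : x = e + u := by rw [hu, ← sub_add_cancel x 1, hxe]; abel
      have he' : e * e = e := he
      refine ⟨↑u⁻¹ * (1 - e) * u, ?_, ?_⟩
      · have := he.one_sub
        unfold IsIdempotentElem at this ⊢
        calc (↑u⁻¹ * (1 - e) * u : R) * (↑u⁻¹ * (1 - e) * u)
            = ↑u⁻¹ * (1 - e) * (u * ↑u⁻¹) * ((1 - e) * u) := by noncomm_ring
          _ = ↑u⁻¹ * ((1 - e) * (1 - e)) * u := by rw [Units.mul_inv]; simp only [mul_one, mul_assoc]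
          _ = _ := by rw [this]
      · have key : x - ↑u⁻¹ * (1 - e) * u = ↑u⁻¹ * (x ^ 2 - x) := by
          rw [Units.eq_inv_mul_iff_mul_eq, mul_sub, mul_assoc, Units.mul_inv_cancel_left, hx', sq,
            add_mul, mul_add, mul_add, he']
          noncomm_ring
        rw [key]
        exact TwoSidedIdeal.mul_mem_left _ _ _ hx
  · rintro ⟨h, hl⟩ a
    obtain ⟨e', z', he, ⟨n, hn, hz⟩, haz⟩ := h (RingCon.mk' _ a)
    obtain ⟨x, rfl⟩ := RingCon.mk'_surjective _ e'
    obtain ⟨e, hee, hxe⟩ := hl x (by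
      rw [← aux_mk, map_sub, map_pow, sq, he.eq, sub_self])
    refine ⟨e, a - e, hee, ⟨n, hn, ?_⟩, by abel⟩
    apply aux_quot
    rw [← aux_mk, map_sub, sub_eq_zero] at hxe
    rw [map_pow, map_sub, haz, ← hxe, add_sub_cancel_left]
    exact hz
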